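/- arXiv:2511.13844 — 3 statements merged into one kernel-verified Lean document; each statement's English description precedes it below -/
import Mathlib

section
/- Let n ≥ 1, σ > 0, and set p_σ = (1 − e^{−1/(2σ)})/2. Then for all bitstrings x, y ∈ {0,1}^n, the Gaussian kernel satisfies the Fourier–Walsh expansion exp(−‖x−y‖₂²/(2σ)) = Σ_{S ⊆ [n]} (1−p_σ)^{n−|S|} · p_σ^{|S|} · Π_{k∈S} (−1)^{x_k + y_k}. -/
open Real Finset

/-!
Both sides factor over the coordinates. On the right, expanding `∏ k, (p χ k + (1 - p))` with
`χ k = (-1) ^ (x k + y k)` produces one term per subset `S`; its `k`-th factor is `1` if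
`x k = y k` and `1 - 2 p` otherwise, so the sum equals `(1 - 2 p) ^ d` for the Hamming distance `d`
of `x` and `y`. On bitstrings `d` is also the squared Euclidean distance, and the choice of `p_σ`
makes `1 - 2 p_σ = exp (-1 / (2 σ))`.
-/

section FourierWalsh

variable {ι R : Type*}

lemma prod_const_mul_add_const [CommSemiring R] (s : Finset ι) (p q : R) (f : ι → R) :
    ∏ k ∈ s, (p * f k + q) =
      ∑ S ∈ s.powerset, q ^ (#s - #S) * p ^ #S * ∏ k ∈ S, f k := by
  classical
  rw [prod_add]
  refine sum_congr rfl fun S hS => ?_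
  rw [prod_mul_distrib, prod_const, prod_const, card_sdiff_of_subset (mem_powerset.mp hS)]
  ring

variable [Fintype ι]

lemma sum_sq_sub_eq_hammingDist [Ring R] (x y : ι → Fin 2) :
    ∑ k, ((x k : R) - (y k : R)) ^ 2 = hammingDist x y := by
  have sq_sub_bit (a b : Fin 2) : ((a : R) - (b : R)) ^ 2 = if a ≠ b then 1 else 0 := by
    fin_cases a <;> fin_cases b <;> simp
  simp only [sq_sub_bit, sum_boole, hammingDist]

lemma prod_ite_eq_pow_hammingDist [CommMonoid R] {α : ι → Type*} [∀ k, DecidableEq (α k)]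
    (r : R) (x y : ∀ k, α k) :
    ∏ k, (if x k = y k then 1 else r) = r ^ hammingDist x y := by
  rw [prod_ite, prod_const_one, one_mul, prod_const, hammingDist]

lemma one_sub_two_mul_pow_hammingDist [CommRing R] (p : R) (x y : ι → Fin 2) :
    (1 - 2 * p) ^ hammingDist x y =
      ∑ S : Finset ι, (1 - p) ^ (Fintype.card ι - #S) * p ^ #S *
        ∏ k ∈ S, (-1 : R) ^ ((x k : ℕ) + (y k : ℕ)) := by
  have neg_one_pow_bit_add (a b : Fin 2) :
      (-1 : R) ^ ((a : ℕ) + (b : ℕ)) = if a = b then 1 else -1 := by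
    fin_cases a <;> fin_cases b <;> simp
  have bit_factor (a b : Fin 2) :
      p * (-1) ^ ((a : ℕ) + (b : ℕ)) + (1 - p) = if a = b then 1 else 1 - 2 * p := by
    rw [neg_one_pow_bit_add]
    split_ifs <;> ring
  rw [← powerset_univ, ← card_univ, ← prod_const_mul_add_const]
  simp only [bit_factor, prod_ite_eq_pow_hammingDist]

theorem gaussian_kernel_fourier_walsh_general (t p : ℝ) (hp : p = (1 - Real.exp (-t)) / 2)
    (x y : ι → Fin 2) :
    Real.exp (-t * ∑ k, ((x k : ℝ) - (y k : ℝ)) ^ 2) =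
      ∑ S : Finset ι, (1 - p) ^ (Fintype.card ι - #S) * p ^ #S *
        ∏ k ∈ S, (-1 : ℝ) ^ ((x k : ℕ) + (y k : ℕ)) := by
  have exp_neg_eq : Real.exp (-t) = 1 - 2 * p := by rw [hp]; ring
  rw [← one_sub_two_mul_pow_hammingDist, sum_sq_sub_eq_hammingDist, mul_comm, Real.exp_nat_mul,
    exp_neg_eq]

end FourierWalsh

/-- **Fourier–Walsh expansion of the Gaussian kernel on bitstrings.**
For `n ≥ 1`, `σ > 0`, and `p_σ = (1 − e^{−1/(2σ)})/2`, every pair of bitstrings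
`x, y : Fin n → Fin 2` satisfies
`exp(−‖x−y‖₂²/(2σ)) = Σ_{S ⊆ [n]} (1−p_σ)^{n−|S|} p_σ^{|S|} Π_{k∈S} (−1)^{x_k+y_k}`. -/
theorem gaussian_kernel_fourier_walsh
    (n : ℕ) (hn : 1 ≤ n) (σ : ℝ) (hσ : 0 < σ)
    (pσ : ℝ) (hpσ : pσ = (1 - Real.exp (-1 / (2 * σ))) / 2)
    (x y : Fin n → Fin 2) :
    Real.exp (-(∑ k, ((x k : ℝ) - (y k : ℝ)) ^ 2) / (2 * σ)) =
      ∑ S : Finset (Fin n),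
        (1 - pσ) ^ (n - S.card) * pσ ^ S.card *
          ∏ k ∈ S, (-1 : ℝ) ^ ((x k : ℕ) + (y k : ℕ)) := by
  have expansion := gaussian_kernel_fourier_walsh_general (1 / (2 * σ)) pσ
    (by rw [hpσ, neg_div]) x y
  rwa [Fintype.card_fin, neg_mul, one_div_mul_eq_div, ← neg_div] at expansion
end

section
/- Let n ≥ 1, σ > 0, and set p_σ = (1 − e^{−1/(2σ)})/2. For any two probability distributions p, q on {0,1}^n, the squared maximum mean discrepancy with Gaussian kernel satisfies MMD²_σ(p,q) = Σ_{S ⊆ [n]} (1−p_σ)^{n−|S|} · p_σ^{|S|} · (⟨Z_S⟩_p − ⟨Z_S⟩_q)². -/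
open Real Finset

/-- The Gaussian kernel with bandwidth `σ` on bitstrings of length `n`. -/
noncomputable def gaussKernel (n : ℕ) (σ : ℝ) (x y : Fin n → Fin 2) : ℝ :=
  Real.exp (-(∑ k, ((x k : ℝ) - (y k : ℝ)) ^ 2) / (2 * σ))

/-- The squared maximum mean discrepancy between two distributions `p, q` on
bitstrings, with respect to a kernel `K`. -/
noncomputable def MMD2 (n : ℕ) (K : (Fin n → Fin 2) → (Fin n → Fin 2) → ℝ)
    (p q : (Fin n → Fin 2) → ℝ) : ℝ :=
  (∑ x, ∑ y, p x * p y * K x y) - 2 * (∑ x, ∑ y, p x * q y * K x y) +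
    (∑ x, ∑ y, q x * q y * K x y)

/-- The expectation value of the Pauli-Z string indexed by `S ⊆ [n]` under a
probability distribution `p` on bitstrings. -/
noncomputable def zExpval (n : ℕ) (S : Finset (Fin n)) (p : (Fin n → Fin 2) → ℝ) : ℝ :=
  ∑ x, p x * ∏ k ∈ S, (-1 : ℝ) ^ (x k : ℕ)

/-!
On a single bit the Gaussian kernel only takes the values `1` and `e^{-1/(2σ)}`, so it equals
`(1 - p_σ) + p_σ (-1)^a (-1)^b`. Multiplying over the `n` bits and expanding the product
diagonalises the kernel in the Walsh characters `x ↦ ∏ k ∈ S, (-1)^{x k}`, and the squared MMD of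
a kernel `∑ i, w i * φ i x * φ i y` is the `w`-weighted sum of the squared differences of the
means of the features `φ i`.
-/

/-- The parameter `p_σ`: the Gaussian kernel at `(x, y)` is the average of `Z_S(x) Z_S(y)` when each
position is put into `S` independently with probability `p_σ`. For `σ < 0` it is negative. -/
noncomputable def flipProb (σ : ℝ) : ℝ :=
  (1 - Real.exp (-1 / (2 * σ))) / 2

/-- The eigenvalue of the Pauli-Z string `Z_S` at the bitstring `x`, that is, the Walsh character
`(-1) ^ ∑ k ∈ S, x k`, with values in `ℝ` so that it can be averaged. -/
noncomputable def zParity {ι : Type*} (S : Finset ι) (x : ι → Fin 2) : ℝ :=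
  ∏ k ∈ S, (-1 : ℝ) ^ (x k : ℕ)

section Expansions

variable {R ι : Type*} [CommSemiring R]

theorem prod_add_mul_eq_sum_powerset (a b : R) (u : ι → R) (s : Finset ι) :
    ∏ k ∈ s, (a + b * u k) =
      ∑ t ∈ s.powerset, a ^ (s.card - t.card) * b ^ t.card * ∏ k ∈ t, u k := by
  classical
  simp_rw [add_comm a, prod_add]
  refine sum_congr rfl fun t ht => ?_
  rw [prod_mul_distrib, prod_const, prod_const, card_sdiff_of_subset (mem_powerset.mp ht)]
  ring

theorem sum_sum_mul_sum_mul_mul {α β : Type*} [Fintype ι] [Fintype α] [Fintype β]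
    (w : ι → R) (φ : ι → α → R) (ψ : ι → β → R) (f : α → R) (g : β → R) :
    ∑ x, ∑ y, f x * g y * ∑ i, w i * (φ i x * ψ i y) =
      ∑ i, w i * ((∑ x, f x * φ i x) * ∑ y, g y * ψ i y) := by
  calc ∑ x, ∑ y, f x * g y * ∑ i, w i * (φ i x * ψ i y)
    _ = ∑ x, ∑ y, ∑ i, w i * (f x * φ i x * (g y * ψ i y)) := by
        simp only [mul_sum]
        congr! 3
        ring
    _ = ∑ i, ∑ x, ∑ y, w i * (f x * φ i x * (g y * ψ i y)) := sum_comm_cycle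
    _ = ∑ i, w i * ((∑ x, f x * φ i x) * ∑ y, g y * ψ i y) := by
        simp_rw [sum_mul_sum, mul_sum]

end Expansions

theorem MMD2_eq_sum_mul_sq_sub {ι : Type*} [Fintype ι] {n : ℕ}
    {K : (Fin n → Fin 2) → (Fin n → Fin 2) → ℝ} (w : ι → ℝ) (φ : ι → (Fin n → Fin 2) → ℝ)
    (hK : ∀ x y, K x y = ∑ i, w i * (φ i x * φ i y)) (p q : (Fin n → Fin 2) → ℝ) :
    MMD2 n K p q = ∑ i, w i * ((∑ x, p x * φ i x) - ∑ x, q x * φ i x) ^ 2 := by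
  simp only [MMD2, hK, sum_sum_mul_sum_mul_mul]
  rw [mul_sum, ← sum_sub_distrib, ← sum_add_distrib]
  congr! 1
  ring

theorem exp_neg_bit_sub_sq_div (σ : ℝ) (a b : Fin 2) :
    Real.exp (-((a : ℝ) - (b : ℝ)) ^ 2 / (2 * σ)) =
      1 - flipProb σ + flipProb σ * ((-1) ^ (a : ℕ) * (-1) ^ (b : ℕ)) := by
  obtain rfl | hab := eq_or_ne a b
  · have hsign : (-1 : ℝ) ^ (a : ℕ) * (-1) ^ (a : ℕ) = 1 := by simp [← mul_pow]
    simp [hsign]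
  · have hsq : ((a : ℝ) - (b : ℝ)) ^ 2 = 1 := by
      fin_cases a <;> fin_cases b <;> simp at hab ⊢
    have hsign : (-1 : ℝ) ^ (a : ℕ) * (-1) ^ (b : ℕ) = -1 := by
      fin_cases a <;> fin_cases b <;> simp at hab ⊢
    rw [hsq, hsign, flipProb]
    ring

theorem gaussKernel_eq_prod (n : ℕ) (σ : ℝ) (x y : Fin n → Fin 2) :
    gaussKernel n σ x y = ∏ k, Real.exp (-((x k : ℝ) - (y k : ℝ)) ^ 2 / (2 * σ)) := by
  rw [gaussKernel, ← Real.exp_sum, ← sum_div, sum_neg_distrib]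

theorem gaussKernel_eq_sum_zParity (n : ℕ) (σ : ℝ) (x y : Fin n → Fin 2) :
    gaussKernel n σ x y =
      ∑ S : Finset (Fin n), (1 - flipProb σ) ^ (n - S.card) * flipProb σ ^ S.card *
        (zParity S x * zParity S y) := by
  simp only [gaussKernel_eq_prod, exp_neg_bit_sub_sq_div, prod_add_mul_eq_sum_powerset,
    powerset_univ, card_univ, Fintype.card_fin, prod_mul_distrib, zParity]

theorem mmd2_eq_sum_z_expvals_general (n : ℕ) (σ : ℝ) (_hσ : σ ≠ 0)
    (p q : (Fin n → Fin 2) → ℝ) :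
    MMD2 n (gaussKernel n σ) p q =
      ∑ S : Finset (Fin n), (1 - flipProb σ) ^ (n - S.card) * flipProb σ ^ S.card *
        (zExpval n S p - zExpval n S q) ^ 2 :=
  MMD2_eq_sum_mul_sq_sub _ zParity (gaussKernel_eq_sum_zParity n σ) p q

/-- **Expectation-value form of the Gaussian `MMD²` loss.**
For `n ≥ 1`, `σ > 0`, `p_σ = (1 − e^{−1/(2σ)})/2`, and probability distributions
`p, q` on `{0,1}^n`,
`MMD²_σ(p,q) = Σ_{S ⊆ [n]} (1−p_σ)^{n−|S|} p_σ^{|S|} (⟨Z_S⟩_p − ⟨Z_S⟩_q)²`. -/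
theorem mmd2_eq_sum_z_expvals
    (n : ℕ) (hn : 1 ≤ n) (σ : ℝ) (hσ : 0 < σ)
    (pσ : ℝ) (hpσ : pσ = (1 - Real.exp (-1 / (2 * σ))) / 2)
    (p q : (Fin n → Fin 2) → ℝ)
    (hp0 : ∀ x, 0 ≤ p x) (hp1 : ∑ x, p x = 1)
    (hq0 : ∀ x, 0 ≤ q x) (hq1 : ∑ x, q x = 1) :
    MMD2 n (gaussKernel n σ) p q =
      ∑ S : Finset (Fin n),
        (1 - pσ) ^ (n - S.card) * pσ ^ S.card *
          (zExpval n S p - zExpval n S q) ^ 2 := by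
  subst hpσ
  exact mmd2_eq_sum_z_expvals_general n σ hσ.ne' p q
end

section
/- Let n ≥ 1 and let A be a 2n × 2n complex skew-symmetric matrix (Aᵀ = −A). Then there exist a unitary 2n × 2n matrix U and nonnegative reals σ_1, …, σ_n such that Uᵀ A U is block diagonal with n consecutive 2×2 blocks of the form [[0, σ_i], [−σ_i, 0]]. -/
open Matrix

/-!
A skew-symmetric `A` is an alternating bilinear form `B x y = xᵀ A y`, and Riesz representation
turns `B` into a conjugate-linear operator `S` with `⟪S x, y⟫ = B x y`. Although `S` is not linear,
`S ∘ S` is, and alternation makes it self-adjoint; so it has an eigenvector `u` with `S u ≠ 0`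
unless `B = 0`. Normalising `u` and `S u` gives an orthonormal pair, and
`B (S u) y = ⟪S (S u), y⟫` is a multiple of `⟪u, y⟫`, so the plane of `u` and `S u` splits off both
for the inner product and for `B`. Induction on the orthogonal complement finishes the proof.
-/

open LinearMap (BilinForm)
open Module (finrank)

section AlternatingForm

variable {𝕜 E : Type*} [RCLike 𝕜] [NormedAddCommGroup E] [InnerProductSpace 𝕜 E]

/-- The conjugate-linear operator that represents a bilinear form `B` through the inner product:
`inner 𝕜 (rieszMap B x) y = B x y`. -/
noncomputable def rieszMap [FiniteDimensional 𝕜 E] (B : BilinForm 𝕜 E) : E →ₗ⋆[𝕜] E :=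
  have := FiniteDimensional.complete 𝕜 E
  (InnerProductSpace.toDual 𝕜 E).symm.toLinearEquiv.toLinearMap.comp
    (LinearMap.toContinuousLinearMap.toLinearMap.comp B)

theorem inner_rieszMap [FiniteDimensional 𝕜 E] (B : BilinForm 𝕜 E) (x y : E) :
    inner 𝕜 (rieszMap B x) y = B x y :=
  have := FiniteDimensional.complete 𝕜 E
  InnerProductSpace.toDual_symm_apply

theorem isSymmetric_rieszMap_comp_rieszMap [FiniteDimensional 𝕜 E] {B : BilinForm 𝕜 E}
    (hB : B.IsAlt) : ((rieszMap B).comp (rieszMap B) : E →ₗ[𝕜] E).IsSymmetric := fun x y ↦ by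
  have hskew (x y : E) :
      inner 𝕜 (rieszMap B (rieszMap B x)) y = -inner 𝕜 (rieszMap B y) (rieszMap B x) := by
    rw [inner_rieszMap, inner_rieszMap, hB.neg_eq]
  calc inner 𝕜 (rieszMap B (rieszMap B x)) y
      = -inner 𝕜 (rieszMap B y) (rieszMap B x) := hskew x y
    _ = star (-inner 𝕜 (rieszMap B x) (rieszMap B y)) := by simp
    _ = star (inner 𝕜 (rieszMap B (rieszMap B y)) x) := by rw [hskew]
    _ = inner 𝕜 x (rieszMap B (rieszMap B y)) := inner_conj_symm _ _

theorem exists_rieszMap_rieszMap_eq_smul [FiniteDimensional 𝕜 E] {B : BilinForm 𝕜 E}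
    (hB : B.IsAlt) (hB₀ : B ≠ 0) :
    ∃ (u : E) (c : 𝕜), ‖u‖ = 1 ∧ rieszMap B u ≠ 0 ∧ rieszMap B (rieszMap B u) = c • u := by
  have hT := isSymmetric_rieszMap_comp_rieszMap hB
  let b := hT.eigenvectorBasis rfl
  obtain ⟨i, hi⟩ : ∃ i, rieszMap B (b i) ≠ 0 := by
    by_contra! h
    refine hB₀ (b.toBasis.ext fun i ↦ LinearMap.ext fun y ↦ ?_)
    rw [b.coe_toBasis, ← inner_rieszMap, h, inner_zero_left, LinearMap.zero_apply,
      LinearMap.zero_apply]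
  exact ⟨b i, hT.eigenvalues rfl i, b.orthonormal.norm_eq_one i, hi,
    hT.apply_eigenvectorBasis rfl i⟩

theorem exists_orthonormal_pair_of_isAlt [FiniteDimensional 𝕜 E] {B : BilinForm 𝕜 E}
    (hB : B.IsAlt) (hE : 2 ≤ finrank 𝕜 E) :
    ∃ (x : Fin 2 → E) (r : ℝ), Orthonormal 𝕜 x ∧ 0 ≤ r ∧ B (x 0) (x 1) = r ∧
      ∀ k, ∀ y ∈ (Submodule.span 𝕜 (Set.range x))ᗮ, B (x k) y = 0 := by
  rcases eq_or_ne B 0 with rfl | hB₀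
  · exact ⟨stdOrthonormalBasis 𝕜 E ∘ Fin.castLE hE, 0,
      (stdOrthonormalBasis 𝕜 E).orthonormal.comp _ (Fin.castLE_injective hE), le_rfl,
      by simp, by simp⟩
  obtain ⟨u, c, hu, hSu, hSSu⟩ := exists_rieszMap_rieszMap_eq_smul hB hB₀
  set v := rieszMap B u with hv
  have hr : (‖v‖ : 𝕜) ≠ 0 := by simpa using hSu
  have huv : inner 𝕜 u v = 0 := by
    rw [inner_eq_zero_symm, inner_rieszMap, hB.self_eq_zero]
  refine ⟨![u, (‖v‖ : 𝕜)⁻¹ • v], ‖v‖, ?_, norm_nonneg v, ?_, fun k y hy ↦ ?_⟩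
  · simp [hu, huv, norm_smul, inner_smul_right, hSu]
  · simp only [cons_val_zero, cons_val_one, map_smul, ← inner_rieszMap, ← hv,
      inner_self_eq_norm_sq_to_K, smul_eq_mul]
    field_simp
  · have hxy (l : Fin 2) := Submodule.inner_right_of_mem_orthogonal
      (Submodule.subset_span (Set.mem_range_self l)) hy
    have huy : inner 𝕜 u y = 0 := hxy 0
    have hvy : inner 𝕜 v y = 0 := by simpa [inner_smul_left, hr] using hxy 1
    fin_cases k
    · simpa [← inner_rieszMap] using hvy
    · simp [← inner_rieszMap, hSSu, inner_smul_left, huy]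

theorem apply_fin_two_of_isAlt {R M : Type*} [CommRing R] [AddCommGroup M] [Module R M]
    {B : BilinForm R M} (hB : B.IsAlt) (x : Fin 2 → M) (a b : Fin 2) :
    B (x a) (x b) = !![0, B (x 0) (x 1); -B (x 0) (x 1), 0] a b := by
  fin_cases a <;> fin_cases b <;> simp [hB.self_eq_zero, hB.neg_eq]

theorem isAlt_toBilin_of_transpose_eq_neg {R M m : Type*} [CommRing R] [NoZeroDivisors R]
    [CharZero R] [AddCommGroup M] [Module R M] [Fintype m] [DecidableEq m] (b : Module.Basis m R M)
    {A : Matrix m m R} (hA : Aᵀ = -A) : (toBilin b A).IsAlt := by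
  have hb (i j) : toBilin b A (b i) (b j) = A i j := by
    rw [← LinearMap.BilinForm.toMatrix_apply, LinearMap.BilinForm.toMatrix_toBilin]
  refine LinearMap.isAlt_iff_eq_neg_flip.2 (LinearMap.ext_basis b b fun i j ↦ ?_)
  simpa [hb] using congrFun₂ hA j i

end AlternatingForm

section BlockDiagonal

/-- The family obtained from the family `w` of `n` blocks by prepending the block `x`. As for
`Matrix.blockDiagonal`, an index consists of the position in a block followed by the block. -/
def consBlock {E k : Type*} {n : ℕ} (x : k → E) (w : k × Fin n → E) (p : k × Fin (n + 1)) : E :=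
  Fin.cons (α := fun _ ↦ k → E) x (fun i a ↦ w (a, i)) p.2 p.1

theorem apply_consBlock_eq_blockDiagonal_cons {α E k : Type*} [Zero α] {n : ℕ} (f : E → E → α)
    {x : k → E} {w : k × Fin n → E} {M : Matrix k k α} {N : Fin n → Matrix k k α}
    (hM : ∀ a b, f (x a) (x b) = M a b) (hN : ∀ p q, f (w p) (w q) = blockDiagonal N p q)
    (hxw : ∀ a p, f (x a) (w p) = 0) (hwx : ∀ p a, f (w p) (x a) = 0) (p q : k × Fin (n + 1)) :
    f (consBlock x w p) (consBlock x w q) =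
      blockDiagonal (Fin.cons M N : Fin (n + 1) → Matrix k k α) p q := by
  obtain ⟨a, i⟩ := p
  obtain ⟨b, j⟩ := q
  cases i using Fin.cases <;> cases j using Fin.cases <;>
    simp [consBlock, blockDiagonal_apply, hM, hN, hxw, hwx, Fin.succ_ne_zero,
      (Fin.succ_ne_zero _).symm]

theorem orthonormal_consBlock {𝕜 E k : Type*} [RCLike 𝕜] [NormedAddCommGroup E]
    [InnerProductSpace 𝕜 E] {n : ℕ} {x : k → E} {w : k × Fin n → E} (hx : Orthonormal 𝕜 x)
    (hw : Orthonormal 𝕜 w) (hxw : ∀ a p, inner 𝕜 (x a) (w p) = 0) :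
    Orthonormal 𝕜 (consBlock x w) := by
  classical
  have hcons : (1 : Fin (n + 1) → Matrix k k 𝕜) = Fin.cons 1 1 := by
    ext i
    cases i using Fin.cases <;> simp
  rw [← gram_eq_one_iff_orthonormal] at hx hw ⊢
  rw [← blockDiagonal_one] at hw ⊢
  rw [hcons]
  exact Matrix.ext <| apply_consBlock_eq_blockDiagonal_cons (inner 𝕜) (congrFun₂ hx)
    (congrFun₂ hw) hxw fun p a ↦ inner_eq_zero_symm.1 (hxw a p)

/-- The Youla canonical form: the block diagonal matrix with blocks `[[0, σ i], [-σ i, 0]]`. -/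
def youlaMatrix (𝕜 : Type*) [RCLike 𝕜] {ι : Type*} [DecidableEq ι] (σ : ι → ℝ) :
    Matrix (Fin 2 × ι) (Fin 2 × ι) 𝕜 :=
  blockDiagonal fun i ↦ !![0, (σ i : 𝕜); -(σ i : 𝕜), 0]

theorem youlaMatrix_cons (𝕜 : Type*) [RCLike 𝕜] {n : ℕ} (r : ℝ) (σ : Fin n → ℝ) :
    youlaMatrix 𝕜 (Fin.cons r σ : Fin (n + 1) → ℝ) =
      blockDiagonal (Fin.cons !![0, (r : 𝕜); -(r : 𝕜), 0]
        fun i ↦ !![0, (σ i : 𝕜); -(σ i : 𝕜), 0] : Fin (n + 1) → Matrix (Fin 2) (Fin 2) 𝕜) := by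
  refine congrArg blockDiagonal (funext fun i ↦ ?_)
  cases i using Fin.cases <;> simp

/-- Enumerates the positions of `n` consecutive `2 × 2` blocks: `(a, i)` is sent to `2 * i + a`. -/
def consecutiveBlocksEquiv (n : ℕ) : Fin 2 × Fin n ≃ Fin (2 * n) :=
  (Equiv.prodComm _ _).trans (finProdFinEquiv.trans (finCongr (mul_comm n 2)))

theorem reindex_youlaMatrix_apply (𝕜 : Type*) [RCLike 𝕜] {n : ℕ} (σ : Fin n → ℝ)
    (i j : Fin (2 * n)) :
    reindex (consecutiveBlocksEquiv n) (consecutiveBlocksEquiv n) (youlaMatrix 𝕜 σ) i j =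
      if (i : ℕ) / 2 = (j : ℕ) / 2 then
        if (i : ℕ) % 2 = 0 ∧ (j : ℕ) % 2 = 1 then (σ ⟨i / 2, by omega⟩ : 𝕜)
        else if (i : ℕ) % 2 = 1 ∧ (j : ℕ) % 2 = 0 then -(σ ⟨i / 2, by omega⟩ : 𝕜)
        else 0
      else 0 := by
  have hblock (s : 𝕜) (a b : Fin 2) : !![0, s; -s, 0] a b =
      if (a : ℕ) = 0 ∧ (b : ℕ) = 1 then s else if (a : ℕ) = 1 ∧ (b : ℕ) = 0 then -s else 0 := by
    fin_cases a <;> fin_cases b <;> simp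
  simp only [reindex_apply, submatrix_apply, youlaMatrix, blockDiagonal_apply, hblock, Fin.ext_iff]
  rfl

end BlockDiagonal

section CanonicalForm

variable {𝕜 : Type*} [RCLike 𝕜]

theorem exists_orthonormal_apply_eq_youlaMatrix {n : ℕ} {E : Type*} [NormedAddCommGroup E]
    [InnerProductSpace 𝕜 E] [FiniteDimensional 𝕜 E] {B : BilinForm 𝕜 E} (hB : B.IsAlt)
    (hE : finrank 𝕜 E = 2 * n) :
    ∃ (w : Fin 2 × Fin n → E) (σ : Fin n → ℝ), Orthonormal 𝕜 w ∧ (∀ i, 0 ≤ σ i) ∧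
      ∀ p q, B (w p) (w q) = youlaMatrix 𝕜 σ p q := by
  induction n generalizing E with
  | zero =>
    exact ⟨fun p ↦ p.2.elim0, Fin.elim0, .of_isEmpty _, fun i ↦ i.elim0, fun p ↦ p.2.elim0⟩
  | succ n ih =>
    obtain ⟨x, r, hx, hr, hxr, hBx⟩ := exists_orthonormal_pair_of_isAlt hB (by omega)
    let K := Submodule.span 𝕜 (Set.range x)
    have hK : finrank 𝕜 Kᗮ = 2 * n := by
      have h : finrank 𝕜 K = 2 := by simpa using finrank_span_eq_card hx.linearIndependent
      have := K.finrank_add_finrank_orthogonal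
      omega
    obtain ⟨w, σ, hw, hσ, hBw⟩ := ih (B := B.restrict Kᗮ) (fun y ↦ hB y) hK
    have hxw (a p) : inner 𝕜 (x a) (w p : E) = 0 :=
      Submodule.inner_right_of_mem_orthogonal (Submodule.subset_span (Set.mem_range_self a))
        (w p).2
    have hBxw (a p) : B (x a) (w p) = 0 := hBx a _ (w p).2
    refine ⟨consBlock x fun p ↦ w p, Fin.cons r σ,
      orthonormal_consBlock hx (hw.comp_linearIsometry Kᗮ.subtypeₗᵢ) hxw, Fin.cases hr hσ, ?_⟩
    rw [youlaMatrix_cons]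
    exact apply_consBlock_eq_blockDiagonal_cons (fun y z ↦ B y z)
      (by simpa only [hxr] using apply_fin_two_of_isAlt hB x) hBw hBxw
      fun p a ↦ hB.eq_iff.1 (hBxw a p)

theorem exists_orthonormalBasis_toMatrix_eq_youlaMatrix {n : ℕ} {E : Type*} [NormedAddCommGroup E]
    [InnerProductSpace 𝕜 E] [FiniteDimensional 𝕜 E] {B : BilinForm 𝕜 E} (hB : B.IsAlt)
    (hE : finrank 𝕜 E = 2 * n) :
    ∃ (b : OrthonormalBasis (Fin 2 × Fin n) 𝕜 E) (σ : Fin n → ℝ), (∀ i, 0 ≤ σ i) ∧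
      LinearMap.BilinForm.toMatrix b.toBasis B = youlaMatrix 𝕜 σ := by
  obtain ⟨w, σ, hw, hσ, hBw⟩ := exists_orthonormal_apply_eq_youlaMatrix hB hE
  obtain ⟨b, hb⟩ := Orthonormal.exists_orthonormalBasis_extension_of_card_eq (𝕜 := 𝕜)
    (by simpa using hE) (s := Set.univ) (hw.comp Subtype.val Subtype.val_injective)
  refine ⟨b, σ, hσ, ?_⟩
  ext p q
  simp [LinearMap.BilinForm.toMatrix_apply, hb, hBw]

theorem youla_decomposition_general {m : Type*} [Fintype m] [DecidableEq m] {n : ℕ}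
    (e : Fin 2 × Fin n ≃ m) (A : Matrix m m 𝕜) (hA : Aᵀ = -A) :
    ∃ (U : Matrix m m 𝕜) (σ : Fin n → ℝ), U ∈ unitaryGroup m 𝕜 ∧ (∀ i, 0 ≤ σ i) ∧
      Uᵀ * A * U = reindex e e (youlaMatrix 𝕜 σ) := by
  let a := EuclideanSpace.basisFun m 𝕜
  obtain ⟨b, σ, hσ, hbσ⟩ := exists_orthonormalBasis_toMatrix_eq_youlaMatrix (n := n)
    (isAlt_toBilin_of_transpose_eq_neg a.toBasis hA) (by simp [← Fintype.card_congr e])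
  refine ⟨a.toBasis.toMatrix (b.reindex e), σ, a.toMatrix_orthonormalBasis_mem_unitary _, hσ, ?_⟩
  calc (a.toBasis.toMatrix (b.reindex e))ᵀ * A * a.toBasis.toMatrix (b.reindex e)
      = LinearMap.BilinForm.toMatrix (b.reindex e).toBasis (toBilin a.toBasis A) := by
        rw [← LinearMap.BilinForm.toMatrix_mul_basis_toMatrix a.toBasis,
          LinearMap.BilinForm.toMatrix_toBilin, OrthonormalBasis.coe_toBasis]
    _ = reindex e e (LinearMap.BilinForm.toMatrix b.toBasis (toBilin a.toBasis A)) := by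
        ext; simp [LinearMap.BilinForm.toMatrix_apply]
    _ = reindex e e (youlaMatrix 𝕜 σ) := by rw [hbσ]

end CanonicalForm

/-- **Youla canonical form of a complex skew-symmetric matrix under unitary
congruence.** If `A` is a `2n × 2n` complex matrix with `Aᵀ = −A`, then there
are a unitary `U` and nonnegative reals `σ_1, …, σ_n` such that `Uᵀ A U` is
block diagonal with `n` consecutive `2×2` blocks `[[0, σ_i], [−σ_i, 0]]`. -/
theorem youla_decomposition (n : ℕ) (hn : 1 ≤ n)
    (A : Matrix (Fin (2 * n)) (Fin (2 * n)) ℂ) (hA : Aᵀ = -A) :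
    ∃ (U : Matrix (Fin (2 * n)) (Fin (2 * n)) ℂ) (σ : Fin n → ℝ),
      U ∈ Matrix.unitaryGroup (Fin (2 * n)) ℂ ∧ (∀ i, 0 ≤ σ i) ∧
      Uᵀ * A * U = Matrix.of (fun (i j : Fin (2 * n)) =>
        if (i : ℕ) / 2 = (j : ℕ) / 2 then
          (if (i : ℕ) % 2 = 0 ∧ (j : ℕ) % 2 = 1 then
            ((σ ⟨(i : ℕ) / 2, by have := i.isLt; omega⟩ : ℝ) : ℂ)
          else if (i : ℕ) % 2 = 1 ∧ (j : ℕ) % 2 = 0 then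
            -((σ ⟨(i : ℕ) / 2, by have := i.isLt; omega⟩ : ℝ) : ℂ)
          else 0)
        else 0) := by
  obtain ⟨U, σ, hU, hσ, h⟩ := youla_decomposition_general (consecutiveBlocksEquiv n) A hA
  exact ⟨U, σ, hU, hσ, h.trans (Matrix.ext (reindex_youlaMatrix_apply ℂ σ))⟩
end
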